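/- Let B be a complex Banach algebra with unit, let A be a complex unital Banach algebra, and let ι : A → B be an injective unital algebra homomorphism with dense range such that the spectral radius of a computed in A equals the spectral radius of ι(a) computed in B, for every a ∈ A. Then A is spectrally invariant in B: an element a ∈ A is invertible in A if and only if ι(a) is invertible in B. -/

import Mathlib

/-!
Approximate the inverse of `ι a` in `B` by some `ι x`. Then `ι (1 - a * x)` and `ι (1 - x * a)`
are small, so their spectral radii are less than `1`. Since `ι` preserves spectral radii, `a * x`
and `x * a` are units of `A`, which gives `a` a right and a left inverse in `A`.
-/

open Filter Topology

section Monoid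

variable {M N F : Type*} [Monoid M] [Monoid N]

theorem isUnit_of_isUnit_mul_of_isUnit_mul {a b c : M} (hab : IsUnit (a * b))
    (hca : IsUnit (c * a)) : IsUnit a :=
  isUnit_iff_exists_and_exists.mpr
    ⟨⟨b * ↑hab.unit⁻¹, by rw [← mul_assoc, hab.mul_val_inv]⟩,
      ⟨↑hca.unit⁻¹ * c, by rw [mul_assoc, hca.val_inv_mul]⟩⟩

variable [TopologicalSpace N] [ContinuousMul N] [FunLike F M N] [MonoidHomClass F M N]

theorem isLocalHom_of_denseRange_of_eventually_isUnit {f : F} (hf : DenseRange f)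
    (hunit : ∀ᶠ x in comap f (𝓝 1), IsUnit x) : IsLocalHom f := by
  refine ⟨fun a ⟨u, hu⟩ ↦ ?_⟩
  let l : Filter M := comap f (𝓝 ↑u⁻¹)
  have hfl : Tendsto f l (𝓝 ↑u⁻¹) := tendsto_comap
  have hright : Tendsto (a * ·) l (comap f (𝓝 1)) := by
    simpa [tendsto_comap_iff, Function.comp_def, ← hu] using hfl.const_mul (f a)
  have hleft : Tendsto (· * a) l (comap f (𝓝 1)) := by
    simpa [tendsto_comap_iff, Function.comp_def, ← hu] using hfl.mul_const (f a)
  have : l.NeBot := comap_neBot_iff_frequently.mpr (mem_closure_iff_frequently.mp (hf _))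
  obtain ⟨x, hax, hxa⟩ := ((hright.eventually hunit).and (hleft.eventually hunit)).exists
  exact isUnit_of_isUnit_mul_of_isUnit_mul hax hxa

end Monoid

section SpectralRadius

variable {𝕜 A B : Type*} [NormedField 𝕜]

theorem isUnit_of_spectralRadius_one_sub_lt_one [Ring A] [Algebra 𝕜 A] {a : A}
    (ha : spectralRadius 𝕜 (1 - a) < 1) : IsUnit a := by
  have hmem : (1 : 𝕜) ∈ resolventSet 𝕜 (1 - a) :=
    spectrum.mem_resolventSet_of_spectralRadius_lt (by simpa using ha)
  simpa [spectrum.mem_resolventSet_iff] using hmem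

variable [NormedRing B] [NormedAlgebra 𝕜 B] [CompleteSpace B]

theorem spectralRadius_le_nnnorm_mul_nnnorm_one (b : B) :
    spectralRadius 𝕜 b ≤ ‖b‖₊ * ‖(1 : B)‖₊ :=
  iSup₂_le fun _ hk ↦ mod_cast spectrum.norm_le_norm_mul_of_mem hk

theorem tendsto_spectralRadius_nhds_zero :
    Tendsto (spectralRadius 𝕜 : B → ENNReal) (𝓝 0) (𝓝 0) := by
  have hbound : Tendsto (fun b : B ↦ ‖b‖ₑ * ‖(1 : B)‖ₑ) (𝓝 0) (𝓝 0) := by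
    simpa using ENNReal.Tendsto.mul_const (continuous_enorm.tendsto (0 : B)) (.inr enorm_ne_top)
  exact tendsto_of_tendsto_of_tendsto_of_le_of_le tendsto_const_nhds hbound
    (fun _ ↦ zero_le) spectralRadius_le_nnnorm_mul_nnnorm_one

theorem eventually_spectralRadius_one_sub_lt_one :
    ∀ᶠ b : B in 𝓝 1, spectralRadius 𝕜 (1 - b) < 1 := by
  have hsub : Tendsto (fun b : B ↦ 1 - b) (𝓝 1) (𝓝 0) := by
    simpa using (continuous_sub_left (1 : B)).tendsto 1
  exact (tendsto_spectralRadius_nhds_zero.comp hsub).eventually_lt_const one_pos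

theorem stmt_2_general [Ring A] [Algebra 𝕜 A] (ι : A →ₐ[𝕜] B) (hdense : DenseRange ι)
    (hrad : ∀ a : A, spectralRadius 𝕜 a ≤ spectralRadius 𝕜 (ι a)) (a : A) :
    IsUnit a ↔ IsUnit (ι a) := by
  have hunit : ∀ᶠ x in comap ι (𝓝 1), IsUnit x := by
    filter_upwards [eventually_spectralRadius_one_sub_lt_one (𝕜 := 𝕜).comap ι] with x hx
    refine isUnit_of_spectralRadius_one_sub_lt_one (𝕜 := 𝕜) ((hrad _).trans_lt ?_)
    rwa [map_sub, map_one]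
  have : IsLocalHom ι := isLocalHom_of_denseRange_of_eventually_isUnit hdense hunit
  exact (isUnit_map_iff ι a).symm

end SpectralRadius

/-- Lemma `lemlaf`: if `A` is a unital Banach algebra continuously embedded (as an injective
unital morphism `ι` with dense range) in a unital Banach algebra `B`, and the spectral radius
of every `a ∈ A` computed in `A` agrees with the one of `ι a` computed in `B`, then `A` is
spectrally invariant in `B`: `a` is invertible in `A` iff `ι a` is invertible in `B`. -/
theorem stmt_2
    (B : Type*) [NormedRing B] [NormedAlgebra ℂ B] [CompleteSpace B]
    (A : Type*) [NormedRing A] [NormedAlgebra ℂ A] [CompleteSpace A]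
    (ι : A →ₐ[ℂ] B)
    (hinj : Function.Injective ι)
    (hdense : DenseRange ι)
    (hrad : ∀ a : A, spectralRadius ℂ a = spectralRadius ℂ (ι a)) :
    ∀ a : A, IsUnit a ↔ IsUnit (ι a) :=
  stmt_2_general ι hdense fun a ↦ (hrad a).le
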